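/- For every s ∈ [1, ∞) there is a constant C(s) such that for all k, λ ∈ ℕ with λ ≥ 1, every smooth f : ℝ² → ℝ with supp f ⊂ [−k,k]², and every smooth ℤ²-periodic g : ℝ² → ℝ, one has ‖f · g(λ·)‖_{L^s(ℝ²)} ≤ ‖f‖_{L^s(ℝ²)} ‖g‖_{L^s([0,1]²)} + C(s) (2k)^{2/s} λ^{−1/s} ‖f‖_{C¹(ℝ²)} ‖g‖_{L^s([0,1]²)}. -/

import Mathlib

open MeasureTheory

/-!
Unfolding over the lattice of periods turns `∫ |f g| ^ s` into the integral over one period cell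
`D` of `F(x) ^ s * |g x| ^ s`, where `F(x)` is the `ℓ ^ s` norm of the values of `f` along the
lattice orbit of `x`. The average of `F ^ s` over `D` is `‖f‖ₛ ^ s / |D|`, so some `y ∈ D` has
`F(y) ≤ ‖f‖ₛ / |D| ^ (1 / s)`. For any other `x ∈ D`, the values of `f` at corresponding points of
the two orbits differ by at most the oscillation `δ` of `f` on a cell, and only the `N` cells
meeting the support matter; Minkowski's inequality then gives `F(x) ≤ F(y) + N ^ (1 / s) * δ`.

Dilating by `lam` reduces oscillation at frequency `lam` to frequency one: it replaces `k` by
`k * lam` and the Lipschitz constant `L` by `L / lam`. The norms scale by the same power of `lam` as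
`N ^ (1 / s)`, so the error keeps the full gain `1 / lam ≤ lam ^ (-1 / s)`.
-/

open Module Set Function
open scoped ENNReal NNReal

lemma tsum_rpow_le_of_le_add {ι : Type*} {T : Finset ι} {a c : ι → ℝ≥0∞} {δ : ℝ≥0∞} {s : ℝ}
    (hs : 1 ≤ s) (ha : support a ⊆ T) (hac : ∀ i, a i ≤ c i + δ) :
    (∑' i, a i ^ s) ^ (1 / s) ≤ (∑' i, c i ^ s) ^ (1 / s) + (T.card : ℝ≥0∞) ^ (1 / s) * δ := by
  have hs₀ : 0 < s := by positivity
  have hδ : (∑ _i ∈ T, δ ^ s) ^ (1 / s) = (T.card : ℝ≥0∞) ^ (1 / s) * δ := by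
    rw [Finset.sum_const, nsmul_eq_mul, ENNReal.mul_rpow_of_nonneg _ _ (by positivity),
      ← ENNReal.rpow_mul, mul_one_div_cancel hs₀.ne', ENNReal.rpow_one]
  calc (∑' i, a i ^ s) ^ (1 / s)
      = (∑ i ∈ T, a i ^ s) ^ (1 / s) := by
        rw [tsum_eq_sum fun i hi ↦ ?_]
        rw [notMem_support.1 fun h ↦ hi (ha h), ENNReal.zero_rpow_of_pos hs₀]
    _ ≤ (∑ i ∈ T, (c i + δ) ^ s) ^ (1 / s) := by gcongr with i; exact hac i
    _ ≤ (∑ i ∈ T, c i ^ s) ^ (1 / s) + (∑ _i ∈ T, δ ^ s) ^ (1 / s) :=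
        ENNReal.Lp_add_le T c _ hs
    _ ≤ (∑' i, c i ^ s) ^ (1 / s) + (T.card : ℝ≥0∞) ^ (1 / s) * δ := by
        rw [hδ]
        gcongr
        exact ENNReal.sum_le_tsum T

lemma inv_le_rpow_neg_one_div {s x : ℝ} (hs : 1 ≤ s) (hx : 1 ≤ x) : x⁻¹ ≤ x ^ (-(1 / s)) := by
  rw [← Real.rpow_neg_one]
  exact Real.rpow_le_rpow_of_exponent_le hx
    (neg_le_neg ((div_le_one₀ (zero_lt_one.trans_le hs)).2 hs))

lemma periodic_of_mem_span_range {E F ι : Type*} [AddCommGroup E] {b : ι → E} {g : E → F}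
    (hg : ∀ i, Periodic g (b i)) {v : E} (hv : v ∈ Submodule.span ℤ (range b)) :
    Periodic g v := by
  induction hv using Submodule.span_induction with
  | mem v hv => obtain ⟨i, rfl⟩ := hv; exact hg i
  | zero => exact fun x ↦ by rw [add_zero]
  | add v w _ _ hv hw => exact hv.add_period hw
  | smul n v _ hv => exact hv.zsmul n

lemma enorm_apply_add_le_of_lipschitzWith {E F : Type*} [SeminormedAddCommGroup E]
    [NormedAddCommGroup F] {L : ℝ≥0} {f : E → F} (hf : LipschitzWith L f) {D : Set E} {x y : E}
    (hx : x ∈ D) (hy : y ∈ D) (v : E) :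
    ‖f (v + x)‖ₑ ≤ ‖f (v + y)‖ₑ + L * Metric.ediam D := by
  calc ‖f (v + x)‖ₑ ≤ ‖f (v + y)‖ₑ + ‖f (v + x) - f (v + y)‖ₑ := by
        simpa using enorm_add_le (f (v + y)) (f (v + x) - f (v + y))
    _ ≤ ‖f (v + y)‖ₑ + L * Metric.ediam D := by
        rw [← edist_eq_enorm_sub]
        gcongr
        refine (hf _ _).trans ?_
        rw [edist_add_left]
        gcongr
        exact Metric.edist_le_ediam_of_mem hx hy

lemma lipschitzWith_iSup_nnnorm_fderiv {E F : Type*} [NormedAddCommGroup E] [NormedSpace ℝ E]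
    [NormedAddCommGroup F] [NormedSpace ℝ F] {f : E → F} (hf : ContDiff ℝ 1 f)
    (hf_supp : HasCompactSupport f) : LipschitzWith (⨆ x, ‖fderiv ℝ f x‖₊) f := by
  refine lipschitzWith_of_nnnorm_fderiv_le (hf.differentiable one_ne_zero) fun x ↦
    le_ciSup (f := fun x ↦ ‖fderiv ℝ f x‖₊) ?_ x
  rw [← NNReal.bddAbove_coe, ← range_comp]
  exact (hf.continuous_fderiv one_ne_zero).norm.bddAbove_range_of_hasCompactSupport
    (hf_supp.fderiv ℝ).norm

lemma toReal_eLpNorm_ofReal {α : Type*} [MeasurableSpace α] {μ : Measure α} {s : ℝ} (hs : 0 < s)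
    {f : α → ℝ} (hf : AEStronglyMeasurable f μ) :
    (eLpNorm f (ENNReal.ofReal s) μ).toReal = (∫ x, |f x| ^ s ∂μ) ^ (1 / s) := by
  rw [toReal_eLpNorm hf, lpNorm_eq_integral_norm_rpow_toReal (by simpa) ENNReal.ofReal_ne_top hf,
    ENNReal.toReal_ofReal hs.le, one_div]
  rfl

lemma memLp_restrict_of_isCompact {X F : Type*} [TopologicalSpace X] [MeasurableSpace X]
    [OpensMeasurableSpace X] [NormedAddCommGroup F] [SecondCountableTopologyEither X F]
    {μ : Measure X} [IsFiniteMeasureOnCompacts μ] {K : Set X} (hK : IsCompact K)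
    (hK_meas : MeasurableSet K) {g : X → F} (hg : Continuous g) (p : ℝ≥0∞) :
    MemLp g p (μ.restrict K) := by
  have : IsFiniteMeasure (μ.restrict K) := ⟨by simpa using hK.measure_lt_top⟩
  obtain ⟨M, hM⟩ := hK.exists_bound_of_continuousOn hg.continuousOn
  exact .of_bound hg.aestronglyMeasurable M <| (ae_restrict_mem hK_meas).mono hM

lemma eLpNorm_comp_smul {E F : Type*} [NormedAddCommGroup E] [NormedSpace ℝ E]
    [FiniteDimensional ℝ E] [MeasurableSpace E] [BorelSpace E] [NormedAddCommGroup F]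
    (μ : Measure E) [μ.IsAddHaarMeasure] {p : ℝ≥0∞} (hp_top : p ≠ ∞) (g : E → F) {r : ℝ}
    (hr : r ≠ 0) :
    eLpNorm (fun x ↦ g (r • x)) p μ = ‖r‖ₑ ^ (-(finrank ℝ E / p.toReal)) * eLpNorm g p μ := by
  have eLpNorm_map :=
    (measurableEmbedding_const_smul₀ hr).eLpNorm_map_measure (g := g) (p := p) (μ := μ)
  have scale_eq : ENNReal.ofReal |(r ^ finrank ℝ E)⁻¹| = ‖r‖ₑ ^ (-(finrank ℝ E : ℝ)) := by
    rw [← Real.enorm_eq_ofReal_abs, enorm_inv (pow_ne_zero _ hr), enorm_pow, ENNReal.rpow_neg,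
      ENNReal.rpow_natCast]
  rw [Measure.map_addHaar_smul μ hr, eLpNorm_smul_measure_of_ne_top hp_top, scale_eq,
    ← ENNReal.rpow_mul, smul_eq_mul] at eLpNorm_map
  rw [← comp_def, ← eLpNorm_map, ENNReal.toReal_div, ENNReal.toReal_one, neg_mul, mul_one_div]

section FundamentalDomain

variable {Γ α : Type*} [AddGroup Γ] [AddAction Γ α] [MeasurableSpace α]
  [MeasurableConstVAdd Γ α] {μ : Measure α} [VAddInvariantMeasure Γ α μ] {D : Set α}
  {u v : α → ℝ≥0∞}

lemma aemeasurable_comp_vadd (γ : Γ) (hu : AEMeasurable u μ) :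
    AEMeasurable (fun x ↦ u (γ +ᵥ x)) (μ.restrict D) :=
  (hu.comp_quasiMeasurePreserving (measurePreserving_vadd γ μ).quasiMeasurePreserving).restrict

lemma lintegral_mul_eq_setLIntegral_tsum [Countable Γ] (hD : IsAddFundamentalDomain Γ D μ)
    (hu : AEMeasurable u μ) (hv : AEMeasurable v μ) (hvΓ : ∀ (γ : Γ) x, v (γ +ᵥ x) = v x) :
    ∫⁻ x, u x * v x ∂μ = ∫⁻ x in D, (∑' γ : Γ, u (γ +ᵥ x)) * v x ∂μ := by
  simp_rw [hD.lintegral_eq_tsum'', ← ENNReal.tsum_mul_right, hvΓ]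
  exact (lintegral_tsum fun γ ↦ (aemeasurable_comp_vadd γ hu).mul hv.restrict).symm

lemma exists_mem_tsum_vadd_le [Countable Γ] (hD : IsAddFundamentalDomain Γ D μ) (hD₀ : μ D ≠ 0)
    (hD_top : μ D ≠ ∞) (hu : AEMeasurable u μ) :
    ∃ y ∈ D, ∑' γ : Γ, u (γ +ᵥ y) ≤ (∫⁻ x, u x ∂μ) / μ D := by
  have hu' (γ : Γ) := aemeasurable_comp_vadd (D := D) γ hu
  rw [hD.lintegral_eq_tsum'', ← lintegral_tsum hu', ← setLAverage_eq]
  exact exists_le_setLAverage hD₀ hD_top (.tsum hu')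

theorem lintegral_mul_rpow_le_of_vadd_invariant [Countable Γ]
    (hD : IsAddFundamentalDomain Γ D μ) (hD₀ : μ D ≠ 0) (hD_top : μ D ≠ ∞) {s : ℝ} (hs : 1 ≤ s)
    (hu : AEMeasurable u μ) (hv : AEMeasurable v μ)
    (hvΓ : ∀ (γ : Γ) x, v (γ +ᵥ x) = v x) {T : Finset Γ}
    (hT : ∀ γ : Γ, ∀ x ∈ D, u (γ +ᵥ x) ≠ 0 → γ ∈ T) {δ : ℝ≥0∞}
    (hδ : ∀ γ : Γ, ∀ x ∈ D, ∀ y ∈ D, u (γ +ᵥ x) ≤ u (γ +ᵥ y) + δ) :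
    (∫⁻ x, (u x * v x) ^ s ∂μ) ^ (1 / s) ≤
      ((∫⁻ x, u x ^ s ∂μ) ^ (1 / s) / μ D ^ (1 / s) + (T.card : ℝ≥0∞) ^ (1 / s) * δ) *
        (∫⁻ x in D, v x ^ s ∂μ) ^ (1 / s) := by
  have hs₀ : 0 < s := by positivity
  set A := (∫⁻ x, u x ^ s ∂μ) ^ (1 / s) / μ D ^ (1 / s) + (T.card : ℝ≥0∞) ^ (1 / s) * δ
  obtain ⟨y, hyD, hy⟩ := exists_mem_tsum_vadd_le hD hD₀ hD_top (hu.pow_const s)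
  have sum_le : ∀ x ∈ D, ∑' γ : Γ, u (γ +ᵥ x) ^ s ≤ A ^ s := fun x hx ↦ by
    rw [← ENNReal.rpow_le_rpow_iff (one_div_pos.2 hs₀), ← ENNReal.rpow_mul A,
      mul_one_div_cancel hs₀.ne', ENNReal.rpow_one]
    refine (tsum_rpow_le_of_le_add hs (fun γ ↦ hT γ x hx) fun γ ↦ hδ γ x hx y hyD).trans ?_
    rw [← ENNReal.rpow_le_rpow_iff (one_div_pos.2 hs₀),
      ENNReal.div_rpow_of_nonneg _ _ (by positivity)] at hy
    exact add_le_add_left hy _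
  calc (∫⁻ x, (u x * v x) ^ s ∂μ) ^ (1 / s)
      = (∫⁻ x in D, (∑' γ : Γ, u (γ +ᵥ x) ^ s) * v x ^ s ∂μ) ^ (1 / s) := by
        simp_rw [ENNReal.mul_rpow_of_nonneg _ _ hs₀.le]
        rw [lintegral_mul_eq_setLIntegral_tsum hD (hu.pow_const s) (hv.pow_const s)
          fun γ x ↦ by rw [hvΓ]]
    _ ≤ (∫⁻ x in D, A ^ s * v x ^ s ∂μ) ^ (1 / s) := by
        gcongr ?_ ^ _
        refine lintegral_mono_ae ?_
        filter_upwards [ae_restrict_mem₀ hD.nullMeasurableSet] with x hx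
        gcongr
        exact sum_le x hx
    _ = A * (∫⁻ x in D, v x ^ s ∂μ) ^ (1 / s) := by
        rw [lintegral_const_mul'' _ (hv.restrict.pow_const s),
          ENNReal.mul_rpow_of_nonneg _ _ (by positivity), ← ENNReal.rpow_mul,
          mul_one_div_cancel hs₀.ne', ENNReal.rpow_one]

end FundamentalDomain

section Lattice

/-- The parallelepiped of points whose coordinates in the basis `b` lie in `[-n, n)`. It plays the
role of the cube `[-k, k]²` containing the support; it is taken half-open so that it is exactly a
union of `(2 * n) ^ d` lattice translates of `ZSpan.fundamentalDomain b`. -/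
def latticeBox {E ι : Type*} [AddCommGroup E] [Module ℝ E] (b : Basis ι ℝ E) (n : ℕ) : Set E :=
  {x | ∀ i, b.repr x i ∈ Ico (-n : ℝ) n}

lemma mem_latticeBox_mul_of_inv_smul_mem {E ι : Type*} [AddCommGroup E] [Module ℝ E]
    {b : Basis ι ℝ E} {k lam : ℕ} (hlam : lam ≠ 0) {x : E}
    (hx : (lam : ℝ)⁻¹ • x ∈ latticeBox b k) : x ∈ latticeBox b (k * lam) := by
  have lam_pos : (0 : ℝ) < lam := by positivity
  intro i
  have hxi := hx i
  rw [map_smul, Finsupp.smul_apply, smul_eq_mul, inv_mul_eq_div, mem_Ico, le_div_iff₀ lam_pos,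
    div_lt_iff₀ lam_pos] at hxi
  rwa [mem_Ico, Nat.cast_mul, ← neg_mul]

variable {E ι : Type*} [NormedAddCommGroup E] [NormedSpace ℝ E] [Fintype ι]

lemma exists_finset_forall_vadd_mem_latticeBox (b : Basis ι ℝ E) (n : ℕ) :
    ∃ T : Finset (Submodule.span ℤ (range b)), T.card = (2 * n) ^ Fintype.card ι ∧
      ∀ γ : Submodule.span ℤ (range b), ∀ x ∈ ZSpan.fundamentalDomain b,
        γ +ᵥ x ∈ latticeBox b n → γ ∈ T := by
  classical
  let coords := (b.restrictScalars ℤ).equivFun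
  refine ⟨(Fintype.piFinset fun _ ↦ Finset.Ico (-n : ℤ) n).map coords.symm.toEquiv.toEmbedding, ?_,
    fun γ x hx hγx ↦ ?_⟩
  · rw [Finset.card_map, Fintype.card_piFinset, Finset.prod_const, Finset.card_univ, Int.card_Ico]
    congr 1
    lia
  · refine Finset.mem_map_equiv.2 (Fintype.mem_piFinset.2 fun i ↦ Finset.mem_Ico.2 ?_)
    have repr_vadd : b.repr (γ +ᵥ x) i = (coords γ i : ℝ) + b.repr x i := by
      rw [Submodule.vadd_def, vadd_eq_add, map_add, Finsupp.add_apply]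
      congr 1
      exact (b.restrictScalars_repr_apply ℤ γ i).symm
    have floor_eq : ⌊b.repr (γ +ᵥ x) i⌋ = coords γ i := by
      rw [repr_vadd, Int.floor_intCast_add, Int.floor_eq_zero_iff.2 (hx i), add_zero]
    change -(n : ℤ) ≤ coords γ i ∧ coords γ i < n
    rw [← floor_eq, Int.le_floor, Int.floor_lt]
    exact_mod_cast hγx i

variable [MeasurableSpace E] [BorelSpace E] {𝕜 F : Type*} [NormedField 𝕜]
  [NormedAddCommGroup F] [NormedSpace 𝕜 F] {p : ℝ≥0∞} {f : E → 𝕜} {g : E → F} {L : ℝ≥0}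

theorem eLpNorm_smul_le_of_periodic (b : Basis ι ℝ E) (μ : Measure E) [μ.IsAddHaarMeasure]
    (hp : 1 ≤ p) (hp_top : p ≠ ∞) {n : ℕ} (hf : LipschitzWith L f)
    (hfn : support f ⊆ latticeBox b n) (hg : AEStronglyMeasurable g μ)
    (hgb : ∀ i, Periodic g (b i)) :
    eLpNorm (fun x ↦ f x • g x) p μ ≤
      (eLpNorm f p μ / μ (ZSpan.fundamentalDomain b) ^ (1 / p.toReal) +
        (2 * n : ℝ≥0∞) ^ (Fintype.card ι / p.toReal) *
          (L * Metric.ediam (ZSpan.fundamentalDomain b))) *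
        eLpNorm g p (μ.restrict (ZSpan.fundamentalDomain b)) := by
  have : VAddInvariantMeasure (Submodule.span ℤ (range b)) E μ :=
    inferInstanceAs <| VAddInvariantMeasure (Submodule.span ℤ (range b)).toAddSubgroup E μ
  have : FiniteDimensional ℝ E := b.finiteDimensional_of_finite
  have hs : 1 ≤ p.toReal := by simpa using ENNReal.toReal_mono hp_top hp
  obtain ⟨T, hT_card, hT⟩ := exists_finset_forall_vadd_mem_latticeBox b n
  have card_rpow : (2 * n : ℝ≥0∞) ^ (Fintype.card ι / p.toReal) =
      (T.card : ℝ≥0∞) ^ (1 / p.toReal) := by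
    rw [hT_card, div_eq_mul_one_div, ENNReal.rpow_mul, ENNReal.rpow_natCast]
    push_cast
    rfl
  simp only [eLpNorm_eq_lintegral_rpow_enorm_toReal (zero_lt_one.trans_le hp).ne' hp_top,
    enorm_smul, card_rpow]
  exact lintegral_mul_rpow_le_of_vadd_invariant (ZSpan.isAddFundamentalDomain b μ)
    (ZSpan.measure_fundamentalDomain_ne_zero b)
    (ZSpan.fundamentalDomain_isBounded b).measure_lt_top.ne hs
    hf.continuous.aestronglyMeasurable.enorm hg.enorm
    (fun γ x ↦ by
      rw [Submodule.vadd_def, vadd_eq_add, add_comm, periodic_of_mem_span_range hgb γ.2])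
    (fun γ x hx hfx ↦ hT γ x hx <| hfn <| by simpa using hfx)
    fun γ x hx y hy ↦ enorm_apply_add_le_of_lipschitzWith hf hx hy γ

theorem improved_holder_general (b : Basis ι ℝ E) (μ : Measure E) [μ.IsAddHaarMeasure]
    (hp : 1 ≤ p) (hp_top : p ≠ ∞) {k lam : ℕ} (hlam : lam ≠ 0) (hf : LipschitzWith L f)
    (hfk : support f ⊆ latticeBox b k) (hg : AEStronglyMeasurable g μ)
    (hgb : ∀ i, Periodic g (b i)) :
    eLpNorm (fun x ↦ f x • g ((lam : ℝ) • x)) p μ ≤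
      (eLpNorm f p μ / μ (ZSpan.fundamentalDomain b) ^ (1 / p.toReal) +
        (2 * k : ℝ≥0∞) ^ (Fintype.card ι / p.toReal) *
          (L / lam * Metric.ediam (ZSpan.fundamentalDomain b))) *
        eLpNorm g p (μ.restrict (ZSpan.fundamentalDomain b)) := by
  have : FiniteDimensional ℝ E := b.finiteDimensional_of_finite
  have hlam' : (lam : ℝ) ≠ 0 := by positivity
  set h : E → 𝕜 := fun x ↦ f ((lam : ℝ)⁻¹ • x)
  have h_smul (x : E) : h ((lam : ℝ) • x) = f x := by simp only [h, inv_smul_smul₀ hlam']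
  have h_lipschitz : LipschitzWith (L * ‖(lam : ℝ)⁻¹‖₊) h := hf.comp (lipschitzWith_smul _)
  have h_support : support h ⊆ latticeBox b (k * lam) := fun x hx ↦
    mem_latticeBox_mul_of_inv_smul_mem hlam (hfk hx)
  set d : ℝ := Fintype.card ι / p.toReal
  set c : ℝ≥0∞ := (lam : ℝ≥0∞) ^ (-d) with hc
  have eLpNorm_dilate_f : eLpNorm f p μ = c * eLpNorm h p μ := by
    simpa [h_smul, finrank_eq_card_basis b] using eLpNorm_comp_smul μ hp_top h hlam'
  have eLpNorm_dilate_fg :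
      eLpNorm (fun x ↦ f x • g ((lam : ℝ) • x)) p μ = c * eLpNorm (fun x ↦ h x • g x) p μ := by
    simpa [h_smul, finrank_eq_card_basis b] using
      eLpNorm_comp_smul μ hp_top (fun x ↦ h x • g x) hlam'
  have c_mul : c * (2 * (k * lam : ℕ)) ^ d = (2 * k : ℝ≥0∞) ^ d := by
    rw [hc, Nat.cast_mul, ← mul_assoc, ENNReal.mul_rpow_of_nonneg _ _ (by positivity),
      mul_left_comm, ← ENNReal.rpow_add _ _ (by simpa) (by simp), neg_add_cancel,
      ENNReal.rpow_zero, mul_one]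
  have lipschitz_eq : ((L * ‖(lam : ℝ)⁻¹‖₊ : ℝ≥0) : ℝ≥0∞) = L / lam := by
    simp [hlam, div_eq_mul_inv]
  rw [eLpNorm_dilate_fg]
  grw [eLpNorm_smul_le_of_periodic b μ hp hp_top h_lipschitz h_support hg hgb]
  rw [← mul_assoc, mul_add, ← mul_assoc c (_ ^ d), c_mul, ← mul_div_assoc, ← eLpNorm_dilate_f,
    lipschitz_eq]

end Lattice

lemma latticeBox_finTwoProd (n : ℕ) :
    latticeBox (Basis.finTwoProd ℝ) n = Ico (-n : ℝ) n ×ˢ Ico (-n : ℝ) n := by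
  ext x
  simp [latticeBox]

lemma fundamentalDomain_finTwoProd :
    ZSpan.fundamentalDomain (Basis.finTwoProd ℝ) = Ico (0 : ℝ) 1 ×ˢ Ico (0 : ℝ) 1 := by
  ext x
  simp [ZSpan.fundamentalDomain]

lemma volume_fundamentalDomain_finTwoProd :
    volume (ZSpan.fundamentalDomain (Basis.finTwoProd ℝ)) = 1 := by
  simp [fundamentalDomain_finTwoProd, Measure.volume_eq_prod]

lemma ediam_fundamentalDomain_finTwoProd_le :
    Metric.ediam (ZSpan.fundamentalDomain (Basis.finTwoProd ℝ)) ≤ 1 := by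
  rw [fundamentalDomain_finTwoProd]
  refine Metric.ediam_le fun x hx y hy ↦ ?_
  rw [edist_dist, ENNReal.ofReal_le_one]
  exact max_le
    (Real.dist_le_of_mem_Icc_01 (Ico_subset_Icc_self hx.1) (Ico_subset_Icc_self hy.1))
    (Real.dist_le_of_mem_Icc_01 (Ico_subset_Icc_self hx.2) (Ico_subset_Icc_self hy.2))

lemma restrict_fundamentalDomain_finTwoProd :
    (volume : Measure (ℝ × ℝ)).restrict (ZSpan.fundamentalDomain (Basis.finTwoProd ℝ)) =
      volume.restrict (Icc (0, 0) (1, 1)) := by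
  rw [fundamentalDomain_finTwoProd, ← Icc_prod_Icc]
  exact Measure.restrict_congr_set (Measure.set_prod_ae_eq Ico_ae_eq_Icc Ico_ae_eq_Icc)

lemma support_subset_latticeBox_finTwoProd {F : Type*} [TopologicalSpace F] [T1Space F] [Zero F]
    {f : ℝ × ℝ → F} {k : ℕ} (hf : Continuous f)
    (hfk : support f ⊆ Icc (-(k : ℝ), -(k : ℝ)) ((k : ℝ), (k : ℝ))) :
    support f ⊆ latticeBox (Basis.finTwoProd ℝ) k := by
  have support_subset := interior_maximal hfk hf.isOpen_support
  rw [← Icc_prod_Icc, interior_prod_eq, interior_Icc] at support_subset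
  rw [latticeBox_finTwoProd]
  exact support_subset.trans (prod_mono Ioo_subset_Ico_self Ioo_subset_Ico_self)

theorem rpow_integral_mul_le_of_periodic {s : ℝ} (hs : 1 ≤ s) {k lam : ℕ} (hlam : lam ≠ 0)
    {f g : ℝ × ℝ → ℝ} {L : ℝ≥0} (hf : LipschitzWith L f)
    (hfk : support f ⊆ Icc (-(k : ℝ), -(k : ℝ)) ((k : ℝ), (k : ℝ))) (hg : Continuous g)
    (hg_per : ∀ (m₁ m₂ : ℤ) (x : ℝ × ℝ), g (x.1 + m₁, x.2 + m₂) = g x) :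
    (∫ x, |f x * g ((lam : ℝ) • x)| ^ s) ^ (1 / s) ≤
      ((∫ x, |f x| ^ s) ^ (1 / s) + (2 * (k : ℝ)) ^ (2 / s) * (L / lam)) *
        (∫ x in Icc (0, 0) (1, 1), |g x| ^ s) ^ (1 / s) := by
  have hs₀ : 0 < s := by positivity
  have hf_cont := hf.continuous
  have hgb : ∀ i, Periodic g (Basis.finTwoProd ℝ i) := by
    rw [Fin.forall_fin_two]
    exact ⟨fun x ↦ by simpa [Prod.add_def] using hg_per 1 0 x,
      fun x ↦ by simpa [Prod.add_def] using hg_per 0 1 x⟩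
  have hf_supp : HasCompactSupport f := .of_support_subset_isCompact isCompact_Icc hfk
  have f_lt_top : eLpNorm f (ENNReal.ofReal s) volume ≠ ∞ :=
    (hf_cont.memLp_of_hasCompactSupport hf_supp).eLpNorm_ne_top
  have g_lt_top :
      eLpNorm g (ENNReal.ofReal s) (volume.restrict (Icc (0, 0) (1, 1))) ≠ ∞ :=
    (memLp_restrict_of_isCompact isCompact_Icc measurableSet_Icc hg _).eLpNorm_ne_top
  have bound := improved_holder_general (Basis.finTwoProd ℝ) volume
    (p := ENNReal.ofReal s) (by simpa) ENNReal.ofReal_ne_top hlam hf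
    (support_subset_latticeBox_finTwoProd hf_cont hfk) hg.aestronglyMeasurable hgb
  grw [ediam_fundamentalDomain_finTwoProd_le] at bound
  rw [restrict_fundamentalDomain_finTwoProd, volume_fundamentalDomain_finTwoProd,
    ENNReal.toReal_ofReal hs₀.le, ENNReal.one_rpow, div_one, mul_one] at bound
  have bound_toReal := ENNReal.toReal_mono (by finiteness) bound
  rw [ENNReal.toReal_mul, ENNReal.toReal_add f_lt_top (by finiteness), ENNReal.toReal_mul,
    toReal_eLpNorm_ofReal hs₀ (by fun_prop), toReal_eLpNorm_ofReal hs₀ (by fun_prop),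
    toReal_eLpNorm_ofReal hs₀ (by fun_prop)] at bound_toReal
  simpa [← ENNReal.toReal_rpow] using bound_toReal

theorem improved_holder (s : ℝ) (hs : 1 ≤ s) :
    ∃ C > 0, ∀ (k lam : ℕ), 1 ≤ lam →
      ∀ f : ℝ × ℝ → ℝ, ContDiff ℝ (⊤ : ℕ∞) f →
        tsupport f ⊆ Set.Icc ((-(k:ℝ), -(k:ℝ)) : ℝ × ℝ) ((k:ℝ), (k:ℝ)) →
      ∀ g : ℝ × ℝ → ℝ, ContDiff ℝ (⊤ : ℕ∞) g →
        (∀ (m₁ m₂ : ℤ) (x : ℝ × ℝ), g (x.1 + m₁, x.2 + m₂) = g x) →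
      (∫ x : ℝ × ℝ, |f x * g ((lam:ℝ) • x)| ^ s) ^ (1/s)
        ≤ (∫ x : ℝ × ℝ, |f x| ^ s) ^ (1/s) *
            (∫ x in Set.Icc (((0:ℝ), (0:ℝ)) : ℝ × ℝ) ((1:ℝ), (1:ℝ)), |g x| ^ s) ^ (1/s)
          + C * (2 * (k:ℝ)) ^ (2/s) * (lam:ℝ) ^ (-(1/s)) *
              ((⨆ x : ℝ × ℝ, |f x|) + ⨆ x : ℝ × ℝ, ‖fderiv ℝ f x‖) *
              (∫ x in Set.Icc (((0:ℝ), (0:ℝ)) : ℝ × ℝ) ((1:ℝ), (1:ℝ)), |g x| ^ s) ^ (1/s) := by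
  refine ⟨1, one_pos, fun k lam hlam f hf hfk g hg hg_per ↦ ?_⟩
  have hf_supp : HasCompactSupport f := isCompact_Icc.of_isClosed_subset (isClosed_tsupport f) hfk
  have hf_lip := lipschitzWith_iSup_nnnorm_fderiv (hf.of_le (by simp)) hf_supp
  refine (rpow_integral_mul_le_of_periodic hs (by lia) hf_lip ((subset_tsupport f).trans hfk)
    hg.continuous hg_per).trans ?_
  have sup_nonneg : 0 ≤ ⨆ x, |f x| := Real.iSup_nonneg fun x ↦ abs_nonneg (f x)
  have sup_fderiv_nonneg : 0 ≤ ⨆ x, ‖fderiv ℝ f x‖ := Real.iSup_nonneg fun x ↦ norm_nonneg _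
  have lipschitz_div_le : (⨆ x, ‖fderiv ℝ f x‖) / lam ≤
      (lam : ℝ) ^ (-(1 / s)) * ((⨆ x, |f x|) + ⨆ x, ‖fderiv ℝ f x‖) := by
    rw [div_eq_inv_mul]
    exact mul_le_mul (inv_le_rpow_neg_one_div hs (mod_cast hlam))
      (le_add_of_nonneg_left sup_nonneg) sup_fderiv_nonneg (by positivity)
  simp only [NNReal.coe_iSup, coe_nnnorm]
  grw [lipschitz_div_le]
  exact le_of_eq (by ring)
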